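/- Fix 0 < d ≤ 1. For each n, let A_n be an n×n random matrix with independent identically distributed Ber(d/n) entries. Then the empirical spectral distributions μ_{A_n} converge in probability to the Dirac measure δ_0 at 0 ∈ ℂ; that is, for every bounded continuous function f : ℂ → ℂ and every ε > 0, the probability that |∫ f dμ_{A_n} − f(0)| ≥ ε tends to 0 as n → ∞. -/

import Mathlib

/-!
Draw an edge `j → i` whenever `A i j ≠ 0`. In the Leibniz expansion of `det (X - A)`, a nonzero term
`σ` fixes every vertex that lies on no directed cycle, and each such vertex contributes the factor
`X`. So if `m` vertices lie on no cycle then `X ^ m` divides the characteristic polynomial, and `A`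
has at most as many nonzero eigenvalues as there are vertices on cycles, hence at most as many as
there are simple cycles with a marked root. If edges appear independently with probability at most
`1 / n`, the expected number of rooted simple cycles is at most `a 1 + ⋯ + a n`, where
`a k = n (n - 1) ⋯ (n - k + 1) / n ^ k`. Since `n (a k - a (k + 1)) = k a k` and `a k ≤ 1`, this sum
is at most `√(2 n)`, which is negligible against `n`.
-/

open MeasureTheory

/-- The Bernoulli measure on `ℂ`, putting mass `p` at `1` and mass `1 - p` at `0`. -/
noncomputable def bernoulliC (p : ℝ) : Measure ℂ :=
  ENNReal.ofReal p • Measure.dirac 1 + ENNReal.ofReal (1 - p) • Measure.dirac 0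

/-- The law of an `n × n` matrix with iid `Ber(p)` entries (taking values `0` or `1` in `ℂ`). -/
noncomputable def iidMatrixLaw (n : ℕ) (p : ℝ) : Measure (Fin n → Fin n → ℂ) :=
  Measure.pi fun _ => Measure.pi fun _ => bernoulliC p

/-- The empirical spectral distribution of an `n × n` complex matrix. -/
noncomputable def empiricalSpectralDist {n : ℕ} (M : Matrix (Fin n) (Fin n) ℂ) : Measure ℂ :=
  ((n : ENNReal))⁻¹ • ((M.charpoly.roots).map Measure.dirac).sum

open Filter Topology
open scoped ENNReal

section Cycles

variable {ι R : Type*} [Zero R]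

/-- `w` lists, without repetition, the vertices of a directed cycle of length `k + 1` in the graph
with an edge `j → i` whenever `M i j ≠ 0`. The index `t + 1` is taken modulo `k + 1`, and `w 0` is
the root of the cycle; a nonzero diagonal entry is a cycle of length `1`. -/
def IsSimpleCycle (M : Matrix ι ι R) {k : ℕ} (w : Fin (k + 1) ↪ ι) : Prop :=
  ∀ t, M (w (t + 1)) (w t) ≠ 0

open Classical in
/-- The rooted simple cycles of the graph of nonzero entries of `M`, of all lengths `k + 1`. -/
noncomputable def simpleCycles [Fintype ι] (M : Matrix ι ι R) :
    Finset (Σ k : Fin (Fintype.card ι), Fin (k + 1) ↪ ι) :=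
  {c | IsSimpleCycle M c.2}

variable [Fintype ι] [DecidableEq ι]

/-- The vertices lying on a directed cycle of the graph of nonzero entries of `M`. -/
noncomputable def cycleVertices (M : Matrix ι ι R) : Finset ι :=
  (simpleCycles M).image fun c => c.2 0

lemma card_cycleVertices_le (M : Matrix ι ι R) :
    (cycleVertices M).card ≤ (simpleCycles M).card :=
  Finset.card_image_le

lemma IsSimpleCycle.root_mem_cycleVertices {M : Matrix ι ι R} {k : ℕ}
    {w : Fin (k + 1) ↪ ι} (hw : IsSimpleCycle M w) : w 0 ∈ cycleVertices M := by
  have hk : k < Fintype.card ι := by simpa using Fintype.card_le_of_embedding w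
  exact Finset.mem_image.mpr ⟨⟨⟨k, hk⟩, w⟩, by simpa [simpleCycles] using hw, rfl⟩

lemma mem_cycleVertices_of_mem_periodicPts {M : Matrix ι ι R} {g : ι → ι} {i : ι}
    (hi : i ∈ g.periodicPts) (hM : ∀ t, M (g^[t + 1] i) (g^[t] i) ≠ 0) :
    i ∈ cycleVertices M := by
  obtain ⟨k, hk⟩ := Nat.exists_eq_succ_of_ne_zero
    (Function.minimalPeriod_pos_of_mem_periodicPts hi).ne'
  have orbit_injective : Function.Injective fun t : Fin (k + 1) => g^[t] i := fun s t hst =>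
    Fin.ext <| Function.iterate_injOn_Iio_minimalPeriod (by simp [hk, s.is_lt])
      (by simp [hk, t.is_lt]) hst
  have orbit_succ (t : Fin (k + 1)) : g^[(t + 1 : Fin (k + 1))] i = g^[t + 1] i := by
    rw [← Function.iterate_mod_minimalPeriod_eq (n := t + 1), hk, Fin.val_add, Fin.val_one',
      Nat.add_mod_mod]
  have : IsSimpleCycle M ⟨fun t : Fin (k + 1) => g^[t] i, orbit_injective⟩ := fun t => by
    simpa only [Function.Embedding.coeFn_mk, orbit_succ] using hM t
  exact this.root_mem_cycleVertices

end Cycles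

section Charpoly

variable {ι R : Type*} [Fintype ι] [DecidableEq ι] [CommRing R]

lemma X_dvd_charmatrix_apply_perm {M : Matrix ι ι R} {σ : Equiv.Perm ι}
    (hσ : ∀ i, M.charmatrix (σ i) i ≠ 0) {i : ι} (hi : i ∉ cycleVertices M) :
    Polynomial.X ∣ M.charmatrix (σ i) i := by
  obtain ⟨t, ht⟩ : ∃ t, M (σ^[t + 1] i) (σ^[t] i) = 0 := by
    contrapose! hi
    exact mem_cycleVertices_of_mem_periodicPts (σ.injective.mem_periodicPts i) hi
  rw [Function.iterate_succ_apply'] at ht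
  have fixed_iterate : σ (σ^[t] i) = σ^[t] i := by
    by_contra hne
    exact hσ _ (by rw [Matrix.charmatrix_apply_ne _ _ _ hne, ht, map_zero, neg_zero])
  have fixed : σ i = i := by
    apply σ.injective.iterate t
    rw [← Function.iterate_succ_apply, Function.iterate_succ_apply', fixed_iterate]
  have hMi : M i i = 0 := by
    rwa [fixed_iterate, Function.iterate_fixed fixed] at ht
  rw [fixed, Matrix.charmatrix_apply_eq, hMi, map_zero, sub_zero]

lemma X_pow_card_compl_cycleVertices_dvd_charpoly (M : Matrix ι ι R) :
    Polynomial.X ^ (cycleVertices M)ᶜ.card ∣ M.charpoly := by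
  rw [Matrix.charpoly, Matrix.det_apply]
  refine Finset.dvd_sum fun σ _ => dvd_smul_of_dvd _ ?_
  by_cases hσ : ∀ i, M.charmatrix (σ i) i ≠ 0
  · rw [← Finset.prod_const]
    exact (Finset.prod_dvd_prod_of_dvd _ _ fun i hi =>
      X_dvd_charmatrix_apply_perm hσ (Finset.mem_compl.mp hi)).trans
        (Finset.prod_dvd_prod_of_subset _ _ _ (Finset.subset_univ _))
  · push Not at hσ
    obtain ⟨i, hi⟩ := hσ
    have : ∏ i, M.charmatrix (σ i) i = 0 := Finset.prod_eq_zero (Finset.mem_univ i) hi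
    exact this ▸ dvd_zero _

lemma card_roots_charpoly_ne_zero_le [IsDomain R] [DecidableEq R] (M : Matrix ι ι R) :
    (M.charpoly.roots.filter (· ≠ 0)).card ≤ (cycleVertices M).card := by
  have zero_roots : (cycleVertices M)ᶜ.card ≤ M.charpoly.roots.count 0 := by
    rw [Polynomial.count_roots, Polynomial.le_rootMultiplicity_iff M.charpoly_monic.ne_zero]
    simpa using X_pow_card_compl_cycleVertices_dvd_charpoly M
  have all_roots : M.charpoly.roots.card ≤ Fintype.card ι :=
    M.charpoly_natDegree_eq_dim ▸ Polynomial.card_roots' _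
  have split := congrArg Multiset.card (Multiset.filter_add_not (· = 0) M.charpoly.roots)
  rw [Multiset.card_add, Multiset.filter_eq', Multiset.card_replicate] at split
  have := (cycleVertices M).card_add_card_compl
  lia

end Charpoly

section EmpiricalSpectralDist

variable {E : Type*} [NormedAddCommGroup E]

lemma integrable_sum_map_dirac {α : Type*} [MeasurableSpace α] [MeasurableSingletonClass α]
    (s : Multiset α) (f : α → E) : Integrable f (s.map Measure.dirac).sum := by
  induction s using Multiset.induction with
  | empty => simp
  | cons a s ih =>
    rw [Multiset.map_cons, Multiset.sum_cons]
    exact (integrable_dirac enorm_lt_top).add_measure ih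

lemma sum_map_dirac_apply {α : Type*} [MeasurableSpace α] (s : Multiset α) {t : Set α}
    [DecidablePred (· ∈ t)] (ht : MeasurableSet t) :
    (s.map Measure.dirac).sum t = (s.filter (· ∈ t)).card := by
  induction s using Multiset.induction with
  | empty => simp
  | cons a s ih =>
    rw [Multiset.map_cons, Multiset.sum_cons, Measure.add_apply, ih, Measure.dirac_apply' _ ht]
    by_cases ha : a ∈ t <;> simp [ha, add_comm]

variable {n : ℕ} (M : Matrix (Fin n) (Fin n) ℂ)

lemma measureReal_empiricalSpectralDist_compl_zero_le :
    (empiricalSpectralDist M).real {0}ᶜ ≤ (simpleCycles M).card / n := by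
  classical
  rw [Measure.real, empiricalSpectralDist, Measure.smul_apply,
    sum_map_dirac_apply _ (measurableSet_singleton 0).compl, smul_eq_mul, ENNReal.toReal_mul,
    ENNReal.toReal_inv, ENNReal.toReal_natCast, ENNReal.toReal_natCast, inv_mul_eq_div]
  gcongr
  exact (card_roots_charpoly_ne_zero_le M).trans (card_cycleVertices_le M)

variable [NeZero n]

lemma integrable_empiricalSpectralDist (f : ℂ → E) : Integrable f (empiricalSpectralDist M) :=
  (integrable_sum_map_dirac _ f).smul_measure (by simp [NeZero.ne n])

lemma isProbabilityMeasure_empiricalSpectralDist :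
    IsProbabilityMeasure (empiricalSpectralDist M) where
  measure_univ := by
    classical
    have card_roots : M.charpoly.roots.card = n := by
      rw [IsAlgClosed.card_roots_eq_natDegree, M.charpoly_natDegree_eq_dim, Fintype.card_fin]
    rw [empiricalSpectralDist, Measure.smul_apply, sum_map_dirac_apply _ .univ]
    simp [card_roots, ENNReal.inv_mul_cancel, NeZero.ne n]

end EmpiricalSpectralDist

lemma norm_integral_sub_le_mul_measureReal_compl_singleton {α E : Type*} [MeasurableSpace α]
    [MeasurableSingletonClass α] [NormedAddCommGroup E] [NormedSpace ℝ E] [CompleteSpace E]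
    {μ : Measure α} [IsProbabilityMeasure μ] {f : α → E} (hf : Integrable f μ) {a : α} {C : ℝ}
    (hC : ∀ x, ‖f x - f a‖ ≤ C) : ‖∫ x, f x ∂μ - f a‖ ≤ C * μ.real {a}ᶜ := by
  calc ‖∫ x, f x ∂μ - f a‖ = ‖∫ x, (f x - f a) ∂μ‖ := by
        rw [integral_sub hf (integrable_const _), integral_const, probReal_univ, one_smul]
    _ = ‖∫ x in {a}ᶜ, (f x - f a) ∂μ‖ := by
        rw [setIntegral_eq_integral_of_forall_compl_eq_zero fun x hx => ?_]
        rw [Set.notMem_compl_iff.mp hx, sub_self]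
    _ ≤ C * μ.real {a}ᶜ :=
        norm_setIntegral_le_of_norm_le_const (measure_lt_top _ _) fun x _ => hC x

lemma norm_integral_empiricalSpectralDist_sub_le {n : ℕ} [NeZero n]
    (M : Matrix (Fin n) (Fin n) ℂ) {E : Type*} [NormedAddCommGroup E] [NormedSpace ℝ E]
    [CompleteSpace E] {f : ℂ → E} {C : ℝ} (hC : ∀ z, ‖f z - f 0‖ ≤ C) :
    ‖∫ z, f z ∂empiricalSpectralDist M - f 0‖ ≤ C / n * (simpleCycles M).card := by
  have hC0 : 0 ≤ C := (norm_nonneg _).trans (hC 0)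
  have := isProbabilityMeasure_empiricalSpectralDist M
  calc ‖∫ z, f z ∂empiricalSpectralDist M - f 0‖
      ≤ C * (empiricalSpectralDist M).real {0}ᶜ :=
        norm_integral_sub_le_mul_measureReal_compl_singleton
          (integrable_empiricalSpectralDist M f) hC
    _ ≤ C * ((simpleCycles M).card / n) := by
        gcongr
        exact measureReal_empiricalSpectralDist_compl_zero_le M
    _ = C / n * (simpleCycles M).card := by ring

section DistinctDraws

/-- The probability that `k` independent uniform draws from a set of `n` elements are
distinct. -/
noncomputable def distinctDrawsProb (n k : ℕ) : ℝ :=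
  n.descFactorial k / n ^ k

lemma distinctDrawsProb_nonneg (n k : ℕ) : 0 ≤ distinctDrawsProb n k := by
  unfold distinctDrawsProb
  positivity

lemma distinctDrawsProb_le_one (n k : ℕ) : distinctDrawsProb n k ≤ 1 :=
  div_le_one_of_le₀ (mod_cast n.descFactorial_le_pow k) (by positivity)

lemma mul_distinctDrawsProb_succ (n k : ℕ) :
    n * distinctDrawsProb n (k + 1) = (n - k) * distinctDrawsProb n k := by
  have : (n.descFactorial (k + 1) : ℝ) = (n - k) * n.descFactorial k := by
    rcases le_or_gt k n with hk | hk
    · rw [Nat.descFactorial_succ, Nat.cast_mul, Nat.cast_sub hk]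
    · simp [Nat.descFactorial_of_lt, hk]
  rw [distinctDrawsProb, distinctDrawsProb, this, pow_succ]
  rcases eq_or_ne n 0 with rfl | hn
  · cases k <;> simp
  · field_simp

lemma sq_sum_distinctDrawsProb_le (n m : ℕ) :
    (∑ k ∈ Finset.range m, distinctDrawsProb n (k + 1)) ^ 2
      ≤ 2 * n * (1 - distinctDrawsProb n (m + 1)) := by
  induction m with
  | zero =>
    simpa using mul_nonneg (by positivity : (0 : ℝ) ≤ 2 * n)
      (sub_nonneg.mpr (distinctDrawsProb_le_one n 1))
  | succ m ih =>
    set S := ∑ k ∈ Finset.range m, distinctDrawsProb n (k + 1)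
    set a := distinctDrawsProb n (m + 1)
    have S_le : S ≤ m := by
      simpa only [Finset.card_range, nsmul_eq_mul, mul_one] using
        Finset.sum_le_card_nsmul (Finset.range m) _ 1
          fun k _ => distinctDrawsProb_le_one n (k + 1)
    have a_le : a ≤ 1 := distinctDrawsProb_le_one n (m + 1)
    rw [Finset.sum_range_succ]
    calc (S + a) ^ 2 = S ^ 2 + a * (2 * S + a) := by ring
      _ ≤ 2 * n * (1 - a) + a * (2 * (m + 1)) :=
        add_le_add ih (mul_le_mul_of_nonneg_left (by linarith) (distinctDrawsProb_nonneg n _))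
      _ = 2 * n * (1 - distinctDrawsProb n (m + 1 + 1)) := by
        have := mul_distinctDrawsProb_succ n (m + 1)
        push_cast at this
        linarith

lemma sum_distinctDrawsProb_le_sqrt (n m : ℕ) :
    ∑ k ∈ Finset.range m, distinctDrawsProb n (k + 1) ≤ √(2 * n) :=
  Real.le_sqrt_of_sq_le <| (sq_sum_distinctDrawsProb_le n m).trans <|
    mul_le_of_le_one_right (by positivity) (sub_le_self _ (distinctDrawsProb_nonneg n _))

end DistinctDraws

section RandomMatrix

lemma measurePi_forall_mem {ι κ α : Type*} [Fintype ι] [Fintype κ] [MeasurableSpace α]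
    (μ : ι → Measure α) [∀ i, IsProbabilityMeasure (μ i)] {r : κ → ι} (hr : r.Injective)
    (s : κ → Set α) : Measure.pi μ {x | ∀ t, x (r t) ∈ s t} = ∏ t, μ (r t) (s t) := by
  classical
  have : {x : ι → α | ∀ t, x (r t) ∈ s t}
      = ((Finset.univ.map ⟨r, hr⟩ : Finset ι) : Set ι).pi (Function.extend r s fun _ => .univ) := by
    ext x
    simp [Set.mem_pi, hr.extend_apply]
  rw [this, Measure.pi_pi_finset, Finset.prod_map]
  simp [hr.extend_apply]

variable {ι R : Type*} [Zero R]

lemma card_simpleCycles_eq_sum_indicator [Fintype ι] (A : ι → ι → R) :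
    ((simpleCycles (Matrix.of A)).card : ℝ≥0∞)
      = ∑ c : Σ k : Fin (Fintype.card ι), Fin (k + 1) ↪ ι,
          {A : ι → ι → R | IsSimpleCycle (Matrix.of A) c.2}.indicator 1 A := by
  classical
  simp [simpleCycles, Set.indicator_apply, Finset.sum_boole]

variable [MeasurableSpace R] {p : ℝ≥0∞}

lemma measure_isSimpleCycle_le [Fintype ι] {ν : ι → ι → Measure R}
    [∀ i j, IsProbabilityMeasure (ν i j)] (hν : ∀ i j, ν i j {0}ᶜ ≤ p) {k : ℕ}
    (w : Fin (k + 1) ↪ ι) :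
    Measure.pi (fun i => Measure.pi (ν i)) {A | IsSimpleCycle (Matrix.of A) w} ≤ p ^ (k + 1) := by
  have rows_injective : Function.Injective fun t : Fin (k + 1) => w (t + 1) :=
    w.injective.comp (add_left_injective 1)
  calc _ = ∏ t, Measure.pi (ν (w (t + 1))) {y : ι → R | y (w t) ∈ ({0}ᶜ : Set R)} :=
        measurePi_forall_mem _ rows_injective fun t => {y : ι → R | y (w t) ∈ ({0}ᶜ : Set R)}
    _ = ∏ t, ν (w (t + 1)) (w t) {0}ᶜ := Finset.prod_congr rfl fun t _ => by
        simpa using measurePi_forall_mem (ν (w (t + 1)))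
          (Function.injective_of_subsingleton fun _ : Unit => w t) fun _ => {0}ᶜ
    _ ≤ ∏ _t : Fin (k + 1), p := Finset.prod_le_prod' fun t _ => hν _ _
    _ = p ^ (k + 1) := by simp

variable [MeasurableSingletonClass R]

lemma measurableSet_isSimpleCycle {k : ℕ} (w : Fin (k + 1) ↪ ι) :
    MeasurableSet {A : ι → ι → R | IsSimpleCycle (Matrix.of A) w} := by
  simp only [IsSimpleCycle, Matrix.of_apply, Set.ofPred_forall]
  exact .iInter fun t =>
    (show Measurable fun A : ι → ι → R => A (w (t + 1)) (w t) by fun_prop)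
      (measurableSet_singleton 0).compl

variable [Fintype ι]

lemma measurable_card_simpleCycles :
    Measurable fun A : ι → ι → R => ((simpleCycles (Matrix.of A)).card : ℝ≥0∞) := by
  simp only [card_simpleCycles_eq_sum_indicator]
  exact Finset.measurable_sum _ fun c _ =>
    measurable_one.indicator (measurableSet_isSimpleCycle c.2)

variable {ν : ι → ι → Measure R} [∀ i j, IsProbabilityMeasure (ν i j)]

lemma lintegral_card_simpleCycles_le (hν : ∀ i j, ν i j {0}ᶜ ≤ p) :
    ∫⁻ A, (simpleCycles (Matrix.of A)).card ∂Measure.pi (fun i => Measure.pi (ν i))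
      ≤ ∑ k ∈ Finset.range (Fintype.card ι),
          (Fintype.card ι).descFactorial (k + 1) * p ^ (k + 1) := by
  simp only [card_simpleCycles_eq_sum_indicator]
  rw [lintegral_finsetSum _ fun c _ =>
    measurable_one.indicator (measurableSet_isSimpleCycle c.2), Fintype.sum_sigma,
    ← Fin.sum_univ_eq_sum_range
      fun k => ((Fintype.card ι).descFactorial (k + 1) : ℝ≥0∞) * p ^ (k + 1)]
  simp only [lintegral_indicator_one (measurableSet_isSimpleCycle _)]
  refine Finset.sum_le_sum fun k _ => ?_
  calc _ ≤ ∑ _w : Fin (k + 1) ↪ ι, p ^ (k + 1 : ℕ) :=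
        Finset.sum_le_sum fun w _ => measure_isSimpleCycle_le hν w
    _ = _ := by simp [Fintype.card_embedding_eq]

lemma lintegral_card_simpleCycles_le_sqrt [Nonempty ι]
    (hν : ∀ i j, ν i j {0}ᶜ ≤ (Fintype.card ι : ℝ≥0∞)⁻¹) :
    ∫⁻ A, (simpleCycles (Matrix.of A)).card ∂Measure.pi (fun i => Measure.pi (ν i))
      ≤ ENNReal.ofReal √(2 * Fintype.card ι) := by
  set n := Fintype.card ι
  have : n ≠ 0 := Fintype.card_ne_zero
  calc _ ≤ ∑ k ∈ Finset.range n, (n.descFactorial (k + 1) : ℝ≥0∞) * (n : ℝ≥0∞)⁻¹ ^ (k + 1) :=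
        lintegral_card_simpleCycles_le hν
    _ = ENNReal.ofReal (∑ k ∈ Finset.range n, distinctDrawsProb n (k + 1)) := by
        rw [ENNReal.ofReal_sum_of_nonneg fun k _ => distinctDrawsProb_nonneg n _]
        refine Finset.sum_congr rfl fun k _ => ?_
        rw [distinctDrawsProb, ENNReal.ofReal_div_of_pos (by positivity),
          ENNReal.ofReal_pow (by positivity), ENNReal.ofReal_natCast, ENNReal.ofReal_natCast,
          ← ENNReal.inv_pow, div_eq_mul_inv]
    _ ≤ _ := ENNReal.ofReal_le_ofReal (sum_distinctDrawsProb_le_sqrt n n)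

end RandomMatrix

lemma measure_le_norm_integral_empiricalSpectralDist_sub_le {n : ℕ} [NeZero n]
    {ν : Fin n → Fin n → Measure ℂ} [∀ i j, IsProbabilityMeasure (ν i j)]
    (hν : ∀ i j, ν i j {0}ᶜ ≤ (n : ℝ≥0∞)⁻¹) {E : Type*} [NormedAddCommGroup E] [NormedSpace ℝ E]
    [CompleteSpace E] {f : ℂ → E} {C : ℝ} (hC : ∀ z, ‖f z - f 0‖ ≤ C) {ε : ℝ} (hε : 0 < ε) :
    Measure.pi (fun i => Measure.pi (ν i))
        {A | ε ≤ ‖∫ z, f z ∂empiricalSpectralDist (Matrix.of A) - f 0‖}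
      ≤ ENNReal.ofReal (C / n * √(2 * n) / ε) := by
  have hC0 : 0 ≤ C := (norm_nonneg _).trans (hC 0)
  calc _ ≤ Measure.pi (fun i => Measure.pi (ν i))
          {A | ENNReal.ofReal ε ≤ ENNReal.ofReal (C / n) * (simpleCycles (Matrix.of A)).card} := by
        refine measure_mono fun A hA => ?_
        rw [Set.mem_ofPred_eq, ← ENNReal.ofReal_natCast, ← ENNReal.ofReal_mul (by positivity)]
        exact ENNReal.ofReal_le_ofReal (hA.trans (norm_integral_empiricalSpectralDist_sub_le _ hC))
    _ ≤ (∫⁻ A, ENNReal.ofReal (C / n) * (simpleCycles (Matrix.of A)).card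
          ∂Measure.pi (fun i => Measure.pi (ν i))) / ENNReal.ofReal ε :=
        meas_ge_le_lintegral_div (measurable_card_simpleCycles.const_mul _).aemeasurable
          (by simpa using hε) ENNReal.ofReal_ne_top
    _ ≤ ENNReal.ofReal (C / n) * ENNReal.ofReal √(2 * n) / ENNReal.ofReal ε := by
        rw [lintegral_const_mul _ measurable_card_simpleCycles]
        gcongr
        simpa using lintegral_card_simpleCycles_le_sqrt (ν := ν) (by simpa using hν)
    _ = _ := by
        rw [← ENNReal.ofReal_mul (by positivity), ← ENNReal.ofReal_div_of_pos hε]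

theorem subcritical_spectral_law_dirac_general {ν : ∀ n : ℕ, Fin n → Fin n → Measure ℂ}
    (hν : ∀ n i j, IsProbabilityMeasure (ν n i j)) (hν0 : ∀ n i j, ν n i j {0}ᶜ ≤ (n : ℝ≥0∞)⁻¹)
    {E : Type*} [NormedAddCommGroup E] [NormedSpace ℝ E] [CompleteSpace E] {f : ℂ → E} {C : ℝ}
    (hC : ∀ z, ‖f z - f 0‖ ≤ C) {ε : ℝ} (hε : 0 < ε) :
    Tendsto (fun n : ℕ => Measure.pi (fun i => Measure.pi (ν n i))
      {A | ε ≤ ‖∫ z, f z ∂empiricalSpectralDist (Matrix.of A) - f 0‖}) atTop (𝓝 0) := by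
  have tendsto_bound :
      Tendsto (fun n : ℕ => ENNReal.ofReal (C / n * √(2 * n) / ε)) atTop (𝓝 0) := by
    have h : Tendsto (fun n : ℕ => C * √2 / ε / √n) atTop (𝓝 0) :=
      (Real.tendsto_sqrt_atTop.comp tendsto_natCast_atTop_atTop).const_div_atTop _
    rw [← ENNReal.ofReal_zero]
    refine ENNReal.tendsto_ofReal (h.congr fun n => ?_)
    rw [Real.sqrt_mul zero_le_two, div_eq_mul_one_div _ √(n : ℝ), ← Real.sqrt_div_self']
    ring
  refine tendsto_of_tendsto_of_tendsto_of_le_of_le' tendsto_const_nhds tendsto_bound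
    (.of_forall fun _ => zero_le) ?_
  filter_upwards [eventually_ne_atTop 0] with n hn
  have : NeZero n := ⟨hn⟩
  have := hν n
  exact measure_le_norm_integral_empiricalSpectralDist_sub_le (hν0 n) hC hε

lemma isProbabilityMeasure_bernoulliC {p : ℝ} (hp0 : 0 ≤ p) (hp1 : p ≤ 1) :
    IsProbabilityMeasure (bernoulliC p) where
  measure_univ := by simp [bernoulliC, ← ENNReal.ofReal_add hp0 (sub_nonneg.mpr hp1)]

lemma bernoulliC_compl_zero (p : ℝ) : bernoulliC p {0}ᶜ = ENNReal.ofReal p := by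
  simp [bernoulliC]

lemma bernoulliC_div_compl_zero_le {d : ℝ} (hd1 : d ≤ 1) {n : ℕ} (hn : 0 < n) :
    bernoulliC (d / n) {0}ᶜ ≤ (n : ℝ≥0∞)⁻¹ := by
  rw [bernoulliC_compl_zero, ENNReal.ofReal_div_of_pos (mod_cast hn), ENNReal.ofReal_natCast,
    ← one_div]
  gcongr
  exact ENNReal.ofReal_le_one.mpr hd1

theorem subcritical_spectral_law_dirac (d : ℝ) (hd0 : 0 < d) (hd1 : d ≤ 1) :
    ∀ f : BoundedContinuousFunction ℂ ℂ, ∀ ε : ℝ, 0 < ε →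
      Filter.Tendsto
        (fun n : ℕ =>
          iidMatrixLaw n (d / n)
            {A | ε ≤ ‖(∫ z, f z ∂(empiricalSpectralDist (Matrix.of A))) - f 0‖})
        Filter.atTop (nhds 0) := by
  exact fun f _ hε => subcritical_spectral_law_dirac_general
    (fun n i _ => isProbabilityMeasure_bernoulliC (by positivity)
      (div_le_one_of_le₀ (hd1.trans (mod_cast i.pos)) n.cast_nonneg))
    (fun _ i _ => bernoulliC_div_compl_zero_le hd1 i.pos)
    (fun z => (dist_eq_norm (f z) (f 0)).ge.trans (f.dist_le_two_norm z 0)) hε
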